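/- Exact bias identity for the one-step absolute error estimator with estimated nuisance functions: for any bounded measurable τ̂ : 𝒳 → ℝ, writing Δ := μ₁ − μ₀, Δ̃ := μ̃₁ − μ̃₀, and R̃ := W(Y − μ̃₁(X))/ẽ(X) − (1−W)(Y − μ̃₀(X))/(1−ẽ(X)), one has E[(Δ̃(X) − τ̂(X))² + 2(Δ̃(X) − τ̂(X))·R̃] − φ(τ̂) = −E[(Δ(X) − Δ̃(X))²] + 2·E[(Δ̃(X) − τ̂(X))·r(X)], where r(x) := (e(x)/ẽ(x) − 1)(μ₁(x) − μ̃₁(x)) − ((1−e(x))/(1−ẽ(x)) − 1)(μ₀(x) − μ̃₀(x)). -/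

import Mathlib

open MeasureTheory ProbabilityTheory

def Bdm {𝒳 : Type*} [MeasurableSpace 𝒳] (f : 𝒳 → ℝ) : Prop :=
  Measurable f ∧ ∃ C, ∀ x, |f x| ≤ C

section helpers
variable {Ω 𝒳 : Type*} [MeasurableSpace Ω] [m𝒳 : MeasurableSpace 𝒳]

theorem Bdm.add {f g : 𝒳 → ℝ} (hf : Bdm f) (hg : Bdm g) : Bdm (fun x => f x + g x) := by
  obtain ⟨hf, C, hC⟩ := hf
  obtain ⟨hg, D, hD⟩ := hg
  exact ⟨hf.add hg, C + D, fun x => (abs_add_le _ _).trans (add_le_add (hC x) (hD x))⟩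

theorem Bdm.mul {f g : 𝒳 → ℝ} (hf : Bdm f) (hg : Bdm g) : Bdm (fun x => f x * g x) := by
  obtain ⟨hf, C, hC⟩ := hf
  obtain ⟨hg, D, hD⟩ := hg
  refine ⟨hf.mul hg, C * D, fun x => ?_⟩
  rw [abs_mul]
  exact mul_le_mul (hC x) (hD x) (abs_nonneg _) ((abs_nonneg _).trans (hC x))

theorem Bdm.const (c : ℝ) : Bdm (fun _ : 𝒳 => c) := ⟨measurable_const, |c|, fun _ => le_rfl⟩

theorem Bdm.neg {f : 𝒳 → ℝ} (hf : Bdm f) : Bdm (fun x => - f x) := by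
  obtain ⟨hf, C, hC⟩ := hf
  exact ⟨hf.neg, C, fun x => by rw [abs_neg]; exact hC x⟩

theorem Bdm.sub {f g : 𝒳 → ℝ} (hf : Bdm f) (hg : Bdm g) : Bdm (fun x => f x - g x) := by
  simpa only [sub_eq_add_neg] using hf.add hg.neg

theorem Bdm.sq {f : 𝒳 → ℝ} (hf : Bdm f) : Bdm (fun x => f x ^ 2) := by
  simpa only [pow_two] using hf.mul hf

theorem Bdm.inv {f : 𝒳 → ℝ} (hf : Measurable f) {c : ℝ} (hc : 0 < c) (h : ∀ x, c ≤ f x) :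
    Bdm (fun x => (f x)⁻¹) := by
  refine ⟨hf.inv, c⁻¹, fun x => ?_⟩
  rw [abs_of_pos (inv_pos.2 (hc.trans_le (h x)))]
  exact inv_anti₀ hc (h x)

theorem Bdm.integrable {f : 𝒳 → ℝ} (hf : Bdm f) (P : Measure Ω) [IsProbabilityMeasure P]
    {X : Ω → 𝒳} (hX : Measurable X) : Integrable (fun ω => f (X ω)) P := by
  obtain ⟨hf, C, hC⟩ := hf
  exact Integrable.of_bound (hf.comp hX).aestronglyMeasurable C (.of_forall fun ω => hC _)

theorem Bdm.key {f h : 𝒳 → ℝ} (hf : Bdm f) (P : Measure Ω) [IsProbabilityMeasure P]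
    {X : Ω → 𝒳} (hX : Measurable X) {g : Ω → ℝ} (hg : Integrable g P)
    (hgh : P[g | m𝒳.comap X] =ᵐ[P] fun ω => h (X ω)) :
    Integrable (fun ω => f (X ω) * g ω) P ∧
      ∫ ω, f (X ω) * g ω ∂P = ∫ ω, f (X ω) * h (X ω) ∂P := by
  obtain ⟨hf, C, hC⟩ := hf
  refine ⟨hg.bdd_mul (c := C) (hf.comp hX).aestronglyMeasurable (.of_forall fun ω => hC _), ?_⟩
  have hm : Measurable[m𝒳.comap X] (fun ω => f (X ω)) := hf.comp (comap_measurable X)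
  have h1 := condExp_stronglyMeasurable_mul_of_bound (μ := P) hX.comap_le
    (f := fun ω => f (X ω)) hm.stronglyMeasurable hg C (.of_forall fun ω => hC _)
  have h2 := integral_condExp (μ := P) (f := (fun ω => f (X ω)) * g) hX.comap_le
  rw [integral_congr_ae h1] at h2
  refine h2.symm.trans (integral_congr_ae ?_)
  filter_upwards [hgh] with ω hω
  simp only [Pi.mul_apply, hω]

theorem Bdm.key3 {F f₁ f₂ f₃ h₁ h₂ h₃ : 𝒳 → ℝ} (hF : Bdm F) (hf₁ : Bdm f₁) (hf₂ : Bdm f₂)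
    (hf₃ : Bdm f₃) (hh₁ : Bdm h₁) (hh₂ : Bdm h₂) (hh₃ : Bdm h₃)
    (P : Measure Ω) [IsProbabilityMeasure P]
    {X : Ω → 𝒳} (hX : Measurable X) {g₁ g₂ g₃ : Ω → ℝ}
    (hg₁ : Integrable g₁ P) (hg₂ : Integrable g₂ P) (hg₃ : Integrable g₃ P)
    (H₁ : P[g₁ | m𝒳.comap X] =ᵐ[P] fun ω => h₁ (X ω))
    (H₂ : P[g₂ | m𝒳.comap X] =ᵐ[P] fun ω => h₂ (X ω))
    (H₃ : P[g₃ | m𝒳.comap X] =ᵐ[P] fun ω => h₃ (X ω)) :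
    ∫ ω, (F (X ω) + f₁ (X ω) * g₁ ω + f₂ (X ω) * g₂ ω + f₃ (X ω) * g₃ ω) ∂P =
    ∫ ω, (F (X ω) + f₁ (X ω) * h₁ (X ω) + f₂ (X ω) * h₂ (X ω) + f₃ (X ω) * h₃ (X ω)) ∂P := by
  obtain ⟨i1, e1⟩ := hf₁.key P hX hg₁ H₁
  obtain ⟨i2, e2⟩ := hf₂.key P hX hg₂ H₂
  obtain ⟨i3, e3⟩ := hf₃.key P hX hg₃ H₃
  have iF := hF.integrable P hX
  have j1 := (hf₁.mul hh₁).integrable P hX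
  have j2 := (hf₂.mul hh₂).integrable P hX
  have j3 := (hf₃.mul hh₃).integrable P hX
  have T : ∀ a b c d : Ω → ℝ, Integrable a P → Integrable b P → Integrable c P →
      Integrable d P → ∫ ω, (a ω + b ω + c ω + d ω) ∂P =
        ∫ ω, a ω ∂P + ∫ ω, b ω ∂P + ∫ ω, c ω ∂P + ∫ ω, d ω ∂P := by
    intro a b c d ha hb hc hd
    have hab : Integrable (fun ω => a ω + b ω) P := ha.add hb
    have habc : Integrable (fun ω => a ω + b ω + c ω) P := hab.add hc
    rw [integral_add habc hd, integral_add hab hc, integral_add ha hb]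
  rw [T _ _ _ _ iF i1 i2 i3, T _ _ _ _ iF j1 j2 j3, e1, e2, e3]

end helpers

/-- Exact bias identity for the one-step absolute error estimator with estimated nuisance
functions: with `Δ := μ₁ − μ₀`, `Δ̃ := μ̃₁ − μ̃₀` and
`R̃ := W(Y − μ̃₁(X))/ẽ(X) − (1−W)(Y − μ̃₀(X))/(1−ẽ(X))`, one has
`E[(Δ̃(X) − τ̂(X))² + 2(Δ̃(X) − τ̂(X))·R̃] − φ(τ̂)
  = −E[(Δ(X) − Δ̃(X))²] + 2·E[(Δ̃(X) − τ̂(X))·r(X)]`. -/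
theorem absolute_error_one_step_bias_identity
    {Ω 𝒳 : Type*} [MeasurableSpace Ω] [m𝒳 : MeasurableSpace 𝒳]
    (P : Measure Ω) [IsProbabilityMeasure P]
    (X : Ω → 𝒳) (W Y : Ω → ℝ)
    (hX : Measurable X) (hW : Measurable W) (hY : Measurable Y)
    (hW01 : ∀ᵐ ω ∂P, W ω = 0 ∨ W ω = 1)
    (M : ℝ) (hM : 0 < M) (hYb : ∀ᵐ ω ∂P, |Y ω| ≤ M)
    (e μ₀ μ₁ : 𝒳 → ℝ)
    (he : Measurable e) (hμ₀ : Measurable μ₀) (hμ₁ : Measurable μ₁)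
    (C₀ C₁ : ℝ) (hμ₀b : ∀ x, |μ₀ x| ≤ C₀) (hμ₁b : ∀ x, |μ₁ x| ≤ C₁)
    (η : ℝ) (hη₀ : 0 < η) (hη₁ : η < 1/2)
    (heb : ∀ x, η ≤ e x ∧ e x ≤ 1 - η)
    (hce : P[W | m𝒳.comap X] =ᵐ[P] fun ω => e (X ω))
    (hc1 : P[fun ω => W ω * Y ω | m𝒳.comap X] =ᵐ[P] fun ω => e (X ω) * μ₁ (X ω))
    (hc0 : P[fun ω => (1 - W ω) * Y ω | m𝒳.comap X]
        =ᵐ[P] fun ω => (1 - e (X ω)) * μ₀ (X ω))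
    (μt₀ μt₁ et : 𝒳 → ℝ)
    (hμt₀ : Measurable μt₀) (hμt₁ : Measurable μt₁) (het : Measurable et)
    (Ct₀ Ct₁ : ℝ) (hμt₀b : ∀ x, |μt₀ x| ≤ Ct₀) (hμt₁b : ∀ x, |μt₁ x| ≤ Ct₁)
    (η' : ℝ) (hη'₀ : 0 < η') (hη'₁ : η' < 1/2)
    (hetb : ∀ x, η' ≤ et x ∧ et x ≤ 1 - η') :
    ∀ (τhat : 𝒳 → ℝ) (B : ℝ), Measurable τhat → (∀ x, |τhat x| ≤ B) →
      (∫ ω, (((μt₁ (X ω) - μt₀ (X ω)) - τhat (X ω)) ^ 2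
          + 2 * ((μt₁ (X ω) - μt₀ (X ω)) - τhat (X ω))
            * (W ω * (Y ω - μt₁ (X ω)) / et (X ω)
              - (1 - W ω) * (Y ω - μt₀ (X ω)) / (1 - et (X ω)))) ∂P)
        - (∫ ω, (τhat (X ω) - (μ₁ (X ω) - μ₀ (X ω))) ^ 2 ∂P)
        = -(∫ ω, ((μ₁ (X ω) - μ₀ (X ω)) - (μt₁ (X ω) - μt₀ (X ω))) ^ 2 ∂P)
          + 2 * ∫ ω, ((μt₁ (X ω) - μt₀ (X ω)) - τhat (X ω))
              * ((e (X ω) / et (X ω) - 1) * (μ₁ (X ω) - μt₁ (X ω))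
                - ((1 - e (X ω)) / (1 - et (X ω)) - 1) * (μ₀ (X ω) - μt₀ (X ω))) ∂P := by
  intro τhat B hτ hτb
  have bτ : Bdm τhat := ⟨hτ, B, hτb⟩
  have b0 : Bdm μ₀ := ⟨hμ₀, C₀, hμ₀b⟩
  have b1 : Bdm μ₁ := ⟨hμ₁, C₁, hμ₁b⟩
  have bt0 : Bdm μt₀ := ⟨hμt₀, Ct₀, hμt₀b⟩
  have bt1 : Bdm μt₁ := ⟨hμt₁, Ct₁, hμt₁b⟩
  have be : Bdm e := ⟨he, 1, fun x => by
    have := heb x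
    rw [abs_le]; constructor <;> linarith⟩
  have ba : Bdm (fun x => (et x)⁻¹) := Bdm.inv het hη'₀ fun x => (hetb x).1
  have bb : Bdm (fun x => (1 - et x)⁻¹) :=
    Bdm.inv (f := fun x => 1 - et x) (measurable_const.sub het) hη'₀
      fun x => by linarith [(hetb x).2]
  have bD : Bdm (fun x => (μt₁ x - μt₀ x) - τhat x) := (bt1.sub bt0).sub bτ
  have bD2 : Bdm (fun x => 2 * ((μt₁ x - μt₀ x) - τhat x)) := (Bdm.const 2).mul bD
  have b1e : Bdm (fun x => 1 - e x) := (Bdm.const 1).sub be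
  have iW : Integrable W P := Integrable.of_bound hW.aestronglyMeasurable 1 (by
    filter_upwards [hW01] with ω h
    rcases h with h | h <;> simp [h])
  have iWY : Integrable (fun ω => W ω * Y ω) P :=
    Integrable.of_bound (hW.mul hY).aestronglyMeasurable M (by
      filter_upwards [hW01, hYb] with ω h h'
      rcases h with h | h <;> simp [h, h', hM.le])
  have iWY' : Integrable (fun ω => (1 - W ω) * Y ω) P :=
    Integrable.of_bound ((measurable_const.sub hW).mul hY).aestronglyMeasurable M (by
      filter_upwards [hW01, hYb] with ω h h'
      rcases h with h | h <;> simp [h, h', hM.le])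
  have K := Bdm.key3 (bD.sq.add ((bD2.mul bb).mul bt0)) (bD2.mul ba)
    (((bD2.mul ba).mul bt1).neg.sub ((bD2.mul bb).mul bt0)) (bD2.mul bb).neg
    (be.mul b1) be (b1e.mul b0) P hX iWY iW iWY' hc1 hce hc0
  have L : ∀ f g : Ω → ℝ, f = g → ∫ ω, f ω ∂P = ∫ ω, g ω ∂P := fun f g h => by rw [h]
  refine (congrArg (· - _) ((L _ _ ?_).trans K)).trans ?_
  · funext ω
    simp only [div_eq_mul_inv]
    ring
  have br := bD.mul ((((be.mul ba).sub (Bdm.const 1)).mul (b1.sub bt1)).sub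
    (((b1e.mul bb).sub (Bdm.const 1)).mul (b0.sub bt0)))
  have i1 := (((bD.sq.add ((bD2.mul bb).mul bt0)).add ((bD2.mul ba).mul (be.mul b1))).add
    ((((bD2.mul ba).mul bt1).neg.sub ((bD2.mul bb).mul bt0)).mul be)).add
    ((bD2.mul bb).neg.mul (b1e.mul b0)) |>.integrable P hX
  have i2 := (bτ.sub (b1.sub b0)).sq.integrable P hX
  have i3 := ((b1.sub b0).sub (bt1.sub bt0)).sq.integrable P hX
  have i4 := br.integrable P hX
  simp only [div_eq_mul_inv]
  rw [← integral_const_mul, ← integral_neg]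
  refine (integral_sub i1 i2).symm.trans (Eq.trans (L _ _ ?_) (integral_add i3.neg (i4.const_mul 2)))
  funext ω
  ring
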